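/- Let P(y_1,…,y_n) = ∑_{|α|≤m} a_α y^α be a real polynomial of total degree at most m, and for 0 ≤ k ≤ m let P_k(y) = ∑_{|α|=k} a_α y^α be its k-homogeneous part. Then max_{z_1,…,z_n ∈ 𝔻} |P_m(z_1,…,z_n)| ≤ 2^{m−1} · max_{x_1,…,x_n ∈ [−1,1]} |P(x_1,…,x_n)|, where 𝔻 is the closed unit disk in ℂ (Visser's inequality). -/

import Mathlib

open MvPolynomial Filter

/-- The sup norm of a real polynomial in `n` variables over the cube `[-1,1]^n`. -/
noncomputable def supNorm {n : ℕ} (P : MvPolynomial (Fin n) ℝ) : ℝ :=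
  sSup {y : ℝ | ∃ x : Fin n → ℝ, (∀ i, |x i| ≤ 1) ∧ y = |eval x P|}

/-- The sup norm of a complex polynomial in `n` variables over the closed polydisk `𝔻^n`. -/
noncomputable def supNormC {n : ℕ} (P : MvPolynomial (Fin n) ℂ) : ℝ :=
  sSup {y : ℝ | ∃ z : Fin n → ℂ, (∀ i, ‖z i‖ ≤ 1) ∧ y = ‖eval z P‖}

/-- The `ℓ_p` norm of the coefficients of a complex polynomial. -/
noncomputable def lpNormC {n : ℕ} (p : ℝ) (P : MvPolynomial (Fin n) ℂ) : ℝ :=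
  (∑ α ∈ P.support, ‖coeff α P‖ ^ p) ^ (1 / p)

lemma visser_aux_root (N : ℕ) (hN : 0 < N) (Q : Polynomial ℂ) (hQ : Q.natDegree ≤ N) (M : ℝ)
    (hM : ∀ w : ℂ, ‖w‖ = 1 → ‖Q.eval w‖ ≤ M) (w : ℂ) (hw : ‖w‖ = 1) :
    ‖Q.coeff 0 + Q.coeff N * w ^ N‖ ≤ M := by
  have hN0 : N ≠ 0 := hN.ne'
  obtain ⟨ζ, hζ⟩ : ∃ ζ : ℂ, IsPrimitiveRoot ζ N := ⟨_, Complex.isPrimitiveRoot_exp N hN0⟩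
  have hζn : ‖ζ‖ = 1 := hζ.norm'_eq_one hN0
  have key : ∑ k ∈ Finset.range N, Q.eval (ζ ^ k * w) =
      N * (Q.coeff 0 + Q.coeff N * w ^ N) := by
    have h1 : ∀ k, Q.eval (ζ ^ k * w) =
        ∑ j ∈ Finset.range (N + 1), Q.coeff j * w ^ j * (ζ ^ j) ^ k := by
      intro k
      rw [Polynomial.eval_eq_sum_range' (Nat.lt_succ_of_le hQ)]
      refine Finset.sum_congr rfl fun j _ => ?_
      rw [mul_pow, ← pow_mul, ← pow_mul, mul_comm k j]; ring
    simp_rw [h1]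
    rw [Finset.sum_comm]
    simp_rw [← Finset.mul_sum]
    rw [Finset.sum_range_succ]
    obtain ⟨K, rfl⟩ : ∃ K, N = K + 1 := ⟨N - 1, by omega⟩
    rw [Finset.sum_range_succ', Finset.sum_eq_zero]
    · simp only [hζ.pow_eq_one]
      simp
      ring
    · intro j hj
      have hj' := Finset.mem_range.1 hj
      have hne : ζ ^ (j + 1) ≠ 1 := hζ.pow_ne_one_of_pos_of_lt (by omega) (by omega)
      rw [geom_sum_eq hne, ← pow_mul, mul_comm (j + 1), pow_mul, hζ.pow_eq_one]
      simp
  have h2 : ‖∑ k ∈ Finset.range N, Q.eval (ζ ^ k * w)‖ ≤ N * M := by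
    refine (norm_sum_le _ _).trans ?_
    refine (Finset.sum_le_card_nsmul _ _ M fun k _ => hM _ (by simp [hζn, hw])).trans ?_
    simp
  rw [key, norm_mul, Complex.norm_natCast] at h2
  exact le_of_mul_le_mul_left h2 (by exact_mod_cast hN)

lemma visser_aux_two (N : ℕ) (hN : 0 < N) (Q : Polynomial ℂ) (hQ : Q.natDegree ≤ N) (M : ℝ)
    (hM : ∀ w : ℂ, ‖w‖ = 1 → ‖Q.eval w‖ ≤ M) (h0 : ‖Q.coeff 0‖ = ‖Q.coeff N‖) :
    2 * ‖Q.coeff N‖ ≤ M := by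
  by_cases hz : Q.coeff N = 0
  · have := hM 1 (by simp)
    rw [hz]; simp; exact (norm_nonneg _).trans this
  · obtain ⟨w, hw⟩ := IsAlgClosed.exists_pow_nat_eq (Q.coeff 0 / Q.coeff N) hN
    have hw1 : ‖w‖ = 1 := by
      have : ‖w‖ ^ N = 1 := by
        rw [← norm_pow, hw, norm_div, h0, div_self (norm_ne_zero_iff.2 hz)]
      exact (pow_eq_one_iff_of_nonneg (norm_nonneg _) hN.ne').1 this
    have := visser_aux_root N hN Q hQ M hM w hw1
    rw [hw, mul_div_cancel₀ _ hz, ← two_mul, norm_mul, h0] at this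
    simpa using this

lemma visser_mul {p q : Polynomial ℂ} {a b : ℕ} {c d : ℂ}
    (hp : p.natDegree ≤ a ∧ p.coeff a = c) (hq : q.natDegree ≤ b ∧ q.coeff b = d) :
    (p * q).natDegree ≤ a + b ∧ (p * q).coeff (a + b) = c * d := by
  refine ⟨Polynomial.natDegree_mul_le_of_le hp.1 hq.1, ?_⟩
  rw [Polynomial.coeff_mul_add_eq_of_natDegree_le hp.1 hq.1, hp.2, hq.2]

lemma visser_pow {p : Polynomial ℂ} {a : ℕ} {c : ℂ}
    (hp : p.natDegree ≤ a ∧ p.coeff a = c) (k : ℕ) :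
    (p ^ k).natDegree ≤ k * a ∧ (p ^ k).coeff (k * a) = c ^ k := by
  induction k with
  | zero => simp
  | succ k ih => rw [pow_succ, pow_succ, Nat.succ_mul]; exact visser_mul ih hp

lemma visser_prod {ι : Type*} (s : Finset ι) (p : ι → Polynomial ℂ) (a : ι → ℕ) (c : ι → ℂ)
    (hp : ∀ i, (p i).natDegree ≤ a i ∧ (p i).coeff (a i) = c i) :
    (∏ i ∈ s, p i).natDegree ≤ ∑ i ∈ s, a i ∧
      (∏ i ∈ s, p i).coeff (∑ i ∈ s, a i) = ∏ i ∈ s, c i := by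
  classical
  induction s using Finset.induction_on with
  | empty => simp
  | insert i s hi ih =>
    rw [Finset.prod_insert hi, Finset.sum_insert hi, Finset.prod_insert hi]
    exact visser_mul (hp i) ih

open Polynomial in
noncomputable def visserProd {n : ℕ} (z : Fin n → ℂ) (α : Fin n →₀ ℕ) : Polynomial ℂ :=
  ∏ j, (Polynomial.C (z j / 2) * Polynomial.X ^ 2 +
    Polynomial.C ((starRingEnd ℂ) (z j) / 2)) ^ α j

noncomputable def visserQ {n : ℕ} (m : ℕ) (P : MvPolynomial (Fin n) ℝ) (z : Fin n → ℂ) :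
    Polynomial ℂ :=
  ∑ α ∈ P.support, Polynomial.C ((coeff α P : ℝ) : ℂ) *
    (Polynomial.X ^ (m - α.degree) * visserProd z α)

lemma visserProd_deg {n : ℕ} (z : Fin n → ℂ) (α : Fin n →₀ ℕ) :
    (visserProd z α).natDegree ≤ α.degree * 2 ∧
      (visserProd z α).coeff (α.degree * 2) = ∏ j, (z j / 2) ^ α j := by
  have := visser_prod Finset.univ (fun j => (Polynomial.C (z j / 2) * Polynomial.X ^ 2 +
    Polynomial.C ((starRingEnd ℂ) (z j) / 2)) ^ α j) (fun j => α j * 2)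
    (fun j => (z j / 2) ^ α j) (fun j => visser_pow ⟨by compute_degree, by
      simp⟩ _)
  rw [← Finset.sum_mul, ← Finsupp.degree_eq_sum] at this
  exact this

lemma visser_hom {n : ℕ} (m : ℕ) (P : MvPolynomial (Fin n) ℝ) (z : Fin n → ℂ) :
    eval z (map (algebraMap ℝ ℂ) (homogeneousComponent m P)) =
      ∑ α ∈ P.support, if α.degree = m then ((coeff α P : ℝ) : ℂ) * ∏ j, z j ^ α j else 0 := by
  rw [homogeneousComponent_apply, map_sum, map_sum, Finset.sum_filter]
  refine Finset.sum_congr rfl fun α _ => ?_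
  split_ifs
  · rw [map_monomial, eval_monomial, Finsupp.prod_fintype _ _ (by simp)]; rfl
  · rfl

lemma visser_half {n : ℕ} (z : Fin n → ℂ) (α : Fin n →₀ ℕ) :
    ∏ j, (z j / 2) ^ α j = (1 / 2) ^ α.degree * ∏ j, z j ^ α j := by
  rw [Finsupp.degree_eq_sum, ← Finset.prod_pow_eq_pow_sum, ← Finset.prod_mul_distrib]
  refine Finset.prod_congr rfl fun j _ => ?_
  rw [← mul_pow]; congr 1; ring

lemma visserQ_deg {n m : ℕ} (P : MvPolynomial (Fin n) ℝ) (hP : P.totalDegree ≤ m)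
    (z : Fin n → ℂ) : (visserQ m P z).natDegree ≤ 2 * m := by
  refine Polynomial.natDegree_sum_le_of_forall_le _ _ fun α hα => ?_
  have h1 : α.degree ≤ m := (le_totalDegree hα).trans hP
  have h := (visserProd_deg z α).1
  refine (Polynomial.natDegree_C_mul_le _ _).trans ?_
  refine (Polynomial.natDegree_mul_le_of_le (Polynomial.natDegree_X_pow_le _) h).trans ?_
  omega

lemma visserQ_top {n m : ℕ} (P : MvPolynomial (Fin n) ℝ) (hP : P.totalDegree ≤ m)
    (z : Fin n → ℂ) : (visserQ m P z).coeff (2 * m) =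
      (1 / 2) ^ m * eval z (map (algebraMap ℝ ℂ) (homogeneousComponent m P)) := by
  rw [visser_hom, visserQ, Polynomial.finsetSum_coeff, Finset.mul_sum]
  refine Finset.sum_congr rfl fun α hα => ?_
  have h1 : α.degree ≤ m := (le_totalDegree hα).trans hP
  have h := visserProd_deg z α
  rw [Polynomial.coeff_C_mul]
  split_ifs with hd
  · subst hd
    rw [mul_comm 2, Nat.sub_self, pow_zero, one_mul, h.2, visser_half]; ring
  · rw [Polynomial.coeff_eq_zero_of_natDegree_lt]
    · simp
    · refine (Polynomial.natDegree_mul_le_of_le (Polynomial.natDegree_X_pow_le _) h.1).trans_lt ?_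
      omega

lemma visserQ_zero {n m : ℕ} (P : MvPolynomial (Fin n) ℝ) (hP : P.totalDegree ≤ m)
    (z : Fin n → ℂ) : (visserQ m P z).coeff 0 =
      (starRingEnd ℂ) ((visserQ m P z).coeff (2 * m)) := by
  rw [visserQ_top P hP, visser_hom, visserQ, Polynomial.finsetSum_coeff, Finset.mul_sum, map_sum]
  refine Finset.sum_congr rfl fun α hα => ?_
  have h1 : α.degree ≤ m := (le_totalDegree hα).trans hP
  rw [Polynomial.coeff_C_mul, Polynomial.mul_coeff_zero]
  split_ifs with hd
  · subst hd
    have : (visserProd z α).coeff 0 = ∏ j, ((starRingEnd ℂ) (z j) / 2) ^ α j := by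
      rw [Polynomial.coeff_zero_eq_eval_zero, visserProd, Polynomial.eval_prod]
      simp
    have h2 : (starRingEnd ℂ) 2 = 2 := map_ofNat _ 2
    rw [this, visser_half]
    simp [h2]
    ring
  · have : m - α.degree ≠ 0 := by omega
    simp [Polynomial.coeff_X_pow, this.symm]

lemma visserQ_eval {n m : ℕ} (P : MvPolynomial (Fin n) ℝ) (hP : P.totalDegree ≤ m)
    (z : Fin n → ℂ) (w : ℂ) (hw : ‖w‖ = 1) : (visserQ m P z).eval w =
      w ^ m * ((eval (fun j => (z j * w).re) P : ℝ) : ℂ) := by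
  rw [visserQ, Polynomial.eval_finsetSum, MvPolynomial.eval_eq', Complex.ofReal_sum,
    Finset.mul_sum]
  refine Finset.sum_congr rfl fun α hα => ?_
  have h1 : α.degree ≤ m := (le_totalDegree hα).trans hP
  have hww : w * (starRingEnd ℂ) w = 1 := by
    rw [Complex.mul_conj, Complex.normSq_eq_norm_sq, hw]; simp
  have : (visserProd z α).eval w = w ^ α.degree * ∏ j, (((z j * w).re : ℝ) : ℂ) ^ α j := by
    rw [visserProd, Polynomial.eval_prod, Finsupp.degree_eq_sum, ← Finset.prod_pow_eq_pow_sum,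
      ← Finset.prod_mul_distrib]
    refine Finset.prod_congr rfl fun j _ => ?_
    rw [Polynomial.eval_pow, ← mul_pow]
    congr 1
    rw [Complex.re_eq_add_conj]
    simp
    linear_combination (-(starRingEnd ℂ) (z j) / 2) * hww
  obtain ⟨k, hk⟩ := Nat.exists_eq_add_of_le h1
  simp only [Polynomial.eval_mul, Polynomial.eval_C, Polynomial.eval_pow, Polynomial.eval_X, this]
  push_cast
  rw [hk, Nat.add_sub_cancel_left, pow_add]
  ring

lemma visser_bdd {n : ℕ} (P : MvPolynomial (Fin n) ℝ) :
    BddAbove {y : ℝ | ∃ x : Fin n → ℝ, (∀ i, |x i| ≤ 1) ∧ y = |eval x P|} := by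
  refine ⟨∑ α ∈ P.support, |coeff α P|, ?_⟩
  rintro y ⟨x, hx, rfl⟩
  rw [MvPolynomial.eval_eq']
  refine (Finset.abs_sum_le_sum_abs _ _).trans (Finset.sum_le_sum fun α _ => ?_)
  rw [abs_mul, Finset.abs_prod]
  refine mul_le_of_le_one_right (abs_nonneg _) (Finset.prod_le_one (fun _ _ => abs_nonneg _) ?_)
  intro i _
  rw [abs_pow]
  exact pow_le_one₀ (abs_nonneg _) (hx i)

lemma visser_le {n : ℕ} (P : MvPolynomial (Fin n) ℝ) (x : Fin n → ℝ) (hx : ∀ i, |x i| ≤ 1) :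
    |eval x P| ≤ supNorm P := le_csSup (visser_bdd P) ⟨x, hx, rfl⟩

/-- Visser's inequality: if `P` is a real polynomial in `n` variables of total degree at
most `m` and `P_m` is its `m`-homogeneous part, then
`max_{z ∈ 𝔻^n} |P_m(z)| ≤ 2^{m-1} · max_{x ∈ [-1,1]^n} |P(x)|`. -/
theorem visser_inequality (n m : ℕ) (P : MvPolynomial (Fin n) ℝ)
    (hP : P.totalDegree ≤ m) :
    supNormC (map (algebraMap ℝ ℂ) (homogeneousComponent m P)) ≤ 2 ^ (m - 1) * supNorm P := by
  refine csSup_le ⟨_, 0, by simp, rfl⟩ ?_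
  rintro y ⟨z, hz, rfl⟩
  have hM : ∀ w : ℂ, ‖w‖ = 1 → ‖(visserQ m P z).eval w‖ ≤ supNorm P := by
    intro w hw
    rw [visserQ_eval P hP z w hw, norm_mul, norm_pow, hw, one_pow, one_mul, Complex.norm_real]
    refine visser_le P _ fun i => (Complex.abs_re_le_norm _).trans ?_
    rw [norm_mul, hw, mul_one]; exact hz i
  rcases Nat.eq_zero_or_pos m with rfl | hm
  · have hd := visserQ_deg P hP z
    have ht := visserQ_top P hP z
    have h1 := hM 1 (by simp)
    rw [Polynomial.eq_C_of_natDegree_le_zero hd, Polynomial.eval_C] at h1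
    simp only [mul_zero, pow_zero, one_mul] at ht
    rw [ht] at h1
    simpa using h1
  · have h := visser_aux_two (2 * m) (by omega) _ (visserQ_deg P hP z) _ hM
      (by rw [visserQ_zero P hP, RCLike.norm_conj])
    rw [visserQ_top P hP, norm_mul] at h
    obtain ⟨k, rfl⟩ : ∃ k, m = k + 1 := ⟨m - 1, by omega⟩
    have h2 := mul_le_mul_of_nonneg_left h (by positivity : (0 : ℝ) ≤ 2 ^ k)
    refine le_trans (le_of_eq ?_) h2
    have h3 : ‖((1 / 2 : ℂ)) ^ (k + 1)‖ = (1 / 2 : ℝ) ^ (k + 1) := by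
      rw [norm_pow]; simp
    rw [h3, pow_succ]
    have h4 : (2 : ℝ) ^ k * (1 / 2) ^ k = 1 := by rw [← mul_pow]; norm_num
    linear_combination (-‖eval z (map (algebraMap ℝ ℂ) (homogeneousComponent (k + 1) P))‖) * h4
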